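/- Let 𝕄 = ⟨M, 𝒞⟩ be a countable transitive model of GB⁻. If ℙ ∈ M is a notion of set forcing (i.e. its domain and ordering are elements of M), then ℙ has bounded names. -/

import Mathlib

noncomputable section

namespace CF

open scoped ZFSet

attribute [local instance] Classical.propDecidable

/-! ### First-order formulas of the language of set theory -/

/-- First-order `∈`-formulas with variables indexed by `ℕ`. -/
inductive EFormula : Type
  | mem : ℕ → ℕ → EFormula
  | eq : ℕ → ℕ → EFormula
  | not : EFormula → EFormula
  | or : EFormula → EFormula → EFormula
  | ex : ℕ → EFormula → EFormula

/-- Satisfaction of an `∈`-formula in the structure `⟨D, ∈⟩` under assignment `v`. -/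
def EFormula.Sat (D : Set ZFSet) (v : ℕ → ZFSet) : EFormula → Prop
  | .mem i j => v i ∈ v j
  | .eq i j => v i = v j
  | .not φ => ¬ EFormula.Sat D v φ
  | .or φ ψ => EFormula.Sat D v φ ∨ EFormula.Sat D v ψ
  | .ex i φ => ∃ x ∈ D, EFormula.Sat D (Function.update v i x) φ

/-- All variables occurring in the formula are `< m`. -/
def EFormula.VarsLt (m : ℕ) : EFormula → Prop
  | .mem i j => i < m ∧ j < m
  | .eq i j => i < m ∧ j < m
  | .not φ => EFormula.VarsLt m φ
  | .or φ ψ => EFormula.VarsLt m φ ∧ EFormula.VarsLt m ψ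
  | .ex i φ => i < m ∧ EFormula.VarsLt m φ

/-- First-order formulas of the two-sorted language of `GB⁻`: set variables indexed by `ℕ`,
class parameters indexed by `ℕ`, and only set quantifiers. -/
inductive GBFormula : Type
  | mem : ℕ → ℕ → GBFormula
  | eq : ℕ → ℕ → GBFormula
  | cls : ℕ → ℕ → GBFormula    -- `vᵢ ∈ C_j`
  | not : GBFormula → GBFormula
  | or : GBFormula → GBFormula → GBFormula
  | ex : ℕ → GBFormula → GBFormula

/-- Satisfaction of a `GBFormula` with set quantifiers ranging over `Mset`,
class parameters `Cs` and set assignment `v`. -/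
def GBFormula.Sat (Mset : Set ZFSet) (Cs : ℕ → Set ZFSet) (v : ℕ → ZFSet) : GBFormula → Prop
  | .mem i j => v i ∈ v j
  | .eq i j => v i = v j
  | .cls i j => v i ∈ Cs j
  | .not φ => ¬ GBFormula.Sat Mset Cs v φ
  | .or φ ψ => GBFormula.Sat Mset Cs v φ ∨ GBFormula.Sat Mset Cs v ψ
  | .ex i φ => ∃ x ∈ Mset, GBFormula.Sat Mset Cs (Function.update v i x) φ

/-! ### Countable transitive models of GB⁻ -/

/-- A countable transitive second-order model `𝕄 = ⟨M, 𝒞⟩` of `GB⁻`: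
`M` is transitive and countable, classes are subsets of `M`, sets are classes, and the axioms
of `GB⁻` hold (extensionality and foundation are automatic for `ZFSet`; the set axioms of `ZF⁻`
with separation and collection allowing class parameters, together with first-order class
comprehension, are listed). -/
structure GBModel.{u} where
  M : Set ZFSet.{u}
  Cls : Set (Set ZFSet)
  countable_M : M.Countable
  countable_Cls : Cls.Countable
  transitive : ∀ x ∈ M, ∀ y : ZFSet, y ∈ x → y ∈ M
  sets_are_classes : ∀ x ∈ M, x.toSet ∈ Cls
  classes_sub : ∀ C ∈ Cls, C ⊆ M
  empty_mem : (∅ : ZFSet) ∈ M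
  pair_mem : ∀ x ∈ M, ∀ y ∈ M, ({x, y} : ZFSet) ∈ M
  sUnion_mem : ∀ x ∈ M, (⋃₀ x : ZFSet) ∈ M
  omega_mem : ZFSet.omega ∈ M
  comprehension : ∀ (φ : GBFormula) (v : ℕ → ZFSet) (Cs : ℕ → Set ZFSet),
    (∀ n, v n ∈ M) → (∀ n, Cs n ∈ Cls) →
    {x : ZFSet | x ∈ M ∧ GBFormula.Sat M Cs (Function.update v 0 x) φ} ∈ Cls
  separation : ∀ C ∈ Cls, ∀ a ∈ M, ∃ b ∈ M, ∀ x : ZFSet, x ∈ b ↔ x ∈ a ∧ x ∈ C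
  collection : ∀ C ∈ Cls, ∀ a ∈ M,
    (∀ x : ZFSet, x ∈ a → ∃ y ∈ M, x.pair y ∈ C) →
    ∃ b ∈ M, ∀ x : ZFSet, x ∈ a → ∃ y : ZFSet, y ∈ b ∧ x.pair y ∈ C

/-- A notion of class forcing `ℙ = ⟨P, ≤_ℙ⟩` for `𝕄`: a partial order (with maximal element
`𝟙_ℙ`) whose domain and order relation are classes of `𝕄`. -/
structure ClassForcing (𝕄 : GBModel) where
  P : Set ZFSet
  le : ZFSet → ZFSet → Prop
  one : ZFSet
  one_mem : one ∈ P
  le_one : ∀ p ∈ P, le p one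
  le_refl : ∀ p ∈ P, le p p
  le_trans : ∀ p q r : ZFSet, le p q → le q r → le p r
  P_cls : P ∈ 𝕄.Cls
  le_cls : {x : ZFSet | ∃ p ∈ P, ∃ q ∈ P, le p q ∧ x = p.pair q} ∈ 𝕄.Cls

/-! ### Names and their evaluation -/

/-- Auxiliary rank-bounded version of `IsName`. -/
def IsNameAux (S : Set ZFSet) (o : Ordinal) (σ : ZFSet) : Prop :=
  ∀ x ∈ σ.toSet, ∃ τ p : ZFSet, x = τ.pair p ∧ p ∈ S ∧
    ∃ _h : τ.rank < o, IsNameAux S τ.rank τ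
termination_by o

/-- `σ` is a `ℙ`-name (for the forcing with conditions `S`): every element of `σ` is a pair
`⟨τ, p⟩` with `τ` a `ℙ`-name and `p ∈ S`. -/
def IsName (S : Set ZFSet) (σ : ZFSet) : Prop := IsNameAux S σ.rank σ

/-- Image of a ZFSet under an arbitrary function (using choice for definability). -/
def zimage (f : ZFSet → ZFSet) (x : ZFSet) : ZFSet :=
  @ZFSet.image f (Classical.allZFSetDefinable _) x

/-- Auxiliary rank-bounded version of the evaluation `σ^G` of a name by a filter. -/
def nameEvalAux (G : Set ZFSet) (o : Ordinal) (σ : ZFSet) : ZFSet :=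
  zimage (fun τ => if h : τ.rank < o then nameEvalAux G τ.rank τ else ∅)
    (ZFSet.sep (fun τ => ∃ p, p ∈ G ∧ τ.pair p ∈ σ) (⋃₀ ⋃₀ σ))
termination_by o
decreasing_by exact h

/-- The evaluation `σ^G = {τ^G | ∃ p ∈ G, ⟨τ, p⟩ ∈ σ}` of a name `σ` by a filter `G`. -/
def nameEval (G : Set ZFSet) (σ : ZFSet) : ZFSet := nameEvalAux G σ.rank σ

/-- Auxiliary rank-bounded version of `nameTC`. -/
def nameTCAux (o : Ordinal) (σ : ZFSet) : Set ZFSet :=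
  {x | ∃ τ p : ZFSet, τ.pair p ∈ σ ∧ (x = p ∨ ∃ _h : τ.rank < o, x ∈ nameTCAux τ.rank τ)}
termination_by o

/-- The set `tc(σ) = ⋃ {{p} ∪ tc(τ) | ⟨τ,p⟩ ∈ σ}` of conditions appearing in the transitive
closure of the name `σ`. -/
def nameTC (σ : ZFSet) : Set ZFSet := nameTCAux σ.rank σ

/-! ### Filters, genericity, generic extensions -/

/-- `G` is a filter on the partial order with domain `S` and ordering `le`. -/
def IsFilterOn (S : Set ZFSet) (le : ZFSet → ZFSet → Prop) (G : Set ZFSet) : Prop :=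
  G ⊆ S ∧ G.Nonempty ∧ (∀ p ∈ G, ∀ q ∈ S, le p q → q ∈ G) ∧
    ∀ p ∈ G, ∀ q ∈ G, ∃ r ∈ G, le r p ∧ le r q

/-- `D` is a dense subclass of the partial order `⟨S, le⟩`. -/
def DenseIn (S : Set ZFSet) (le : ZFSet → ZFSet → Prop) (D : Set ZFSet) : Prop :=
  D ⊆ S ∧ ∀ p ∈ S, ∃ q ∈ D, le q p

/-- `G` is a generic filter on `⟨S, le⟩` over `𝕄`: a filter meeting every dense subclass
of `⟨S, le⟩` lying in `𝒞`. -/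
def IsGeneric (𝕄 : GBModel) (S : Set ZFSet) (le : ZFSet → ZFSet → Prop) (G : Set ZFSet) : Prop :=
  IsFilterOn S le G ∧ ∀ D ∈ 𝕄.Cls, DenseIn S le D → (G ∩ D).Nonempty

/-- The generic extension `M[G] = {σ^G | σ ∈ M a name for the forcing with domain S}`. -/
def MGen (𝕄 : GBModel) (S : Set ZFSet) (G : Set ZFSet) : Set ZFSet :=
  {x | ∃ σ : ZFSet, σ ∈ 𝕄.M ∧ IsName S σ ∧ nameEval G σ = x}

/-! ### Compatibility, the set decision property -/

/-- `p` and `q` are compatible in `⟨S, le⟩`. -/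
def Compat (S : Set ZFSet) (le : ZFSet → ZFSet → Prop) (p q : ZFSet) : Prop :=
  ∃ r ∈ S, le r p ∧ le r q

/-- `p ≤* q` : every extension of `p` is compatible with `q`. -/
def leStar (S : Set ZFSet) (le : ZFSet → ZFSet → Prop) (p q : ZFSet) : Prop :=
  ∀ r ∈ S, le r p → Compat S le r q

/-- `p` decides the set of conditions `A`: for every `a ∈ A`, either `p ≤* a` or `p ⊥ a`. -/
def Decides (S : Set ZFSet) (le : ZFSet → ZFSet → Prop) (p A : ZFSet) : Prop :=
  ∀ a : ZFSet, a ∈ A → leStar S le p a ∨ ¬ Compat S le p a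

/-- The set decision property: every set of conditions in `M` is decided densely. -/
def SetDecisionProperty (𝕄 : GBModel) (F : ClassForcing 𝕄) : Prop :=
  ∀ p ∈ F.P, ∀ A : ZFSet, A ∈ 𝕄.M → (∀ a : ZFSet, a ∈ A → a ∈ F.P) →
    ∃ q ∈ F.P, F.le q p ∧ Decides F.P F.le q A

/-! ### The forcing theorem -/

/-- Encode a finite list of sets as a single set by iterated Kuratowski pairing. -/
def listEncode : List ZFSet → ZFSet
  | [] => ∅
  | a :: l => a.pair (listEncode l)

/-- The assignment sending variable `n < m` to `σₙ^G` (and `∅` beyond `m`). -/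
def namesAssign (G : Set ZFSet) (m : ℕ) (σs : Fin m → ZFSet) : ℕ → ZFSet :=
  fun n => if h : n < m then nameEval G (σs ⟨n, h⟩) else ∅

/-- `p ⊩_ℙ φ(σ₀, …, σ_{m-1})` : for every generic `G ∋ p`, `M[G] ⊨ φ(σ₀^G, …, σ_{m-1}^G)`. -/
def Forces (𝕄 : GBModel) (F : ClassForcing 𝕄) (φ : EFormula) (m : ℕ) (p : ZFSet)
    (σs : Fin m → ZFSet) : Prop :=
  ∀ G : Set ZFSet, IsGeneric 𝕄 F.P F.le G → p ∈ G →
    EFormula.Sat (MGen 𝕄 F.P G) (namesAssign G m σs) φ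

/-- `ℙ` satisfies the forcing theorem over `𝕄`: for every `∈`-formula `φ(v₀,…,v_{m-1})`,
the forcing relation is a class of `𝕄` (definability lemma) and everything true in a generic
extension is forced by a condition in the generic filter (truth lemma). -/
def SatisfiesForcingTheorem (𝕄 : GBModel) (F : ClassForcing 𝕄) : Prop :=
  ∀ (φ : EFormula) (m : ℕ), EFormula.VarsLt m φ →
    ({x : ZFSet | ∃ p ∈ F.P, ∃ σs : Fin m → ZFSet,
        (∀ i, σs i ∈ 𝕄.M ∧ IsName F.P (σs i)) ∧
        Forces 𝕄 F φ m p σs ∧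
        x = p.pair (listEncode (List.ofFn σs))} ∈ 𝕄.Cls) ∧
    ∀ σs : Fin m → ZFSet, (∀ i, σs i ∈ 𝕄.M ∧ IsName F.P (σs i)) →
      ∀ G : Set ZFSet, IsGeneric 𝕄 F.P F.le G →
        EFormula.Sat (MGen 𝕄 F.P G) (namesAssign G m σs) φ →
        ∃ p ∈ G, Forces 𝕄 F φ m p σs

/-! ### Complete subforcings, the set reduction property -/

/-- `A` is an antichain of the partial order `⟨S, le⟩`. -/
def IsAntichainIn (S : Set ZFSet) (le : ZFSet → ZFSet → Prop) (A : Set ZFSet) : Prop :=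
  A ⊆ S ∧ ∀ p ∈ A, ∀ q ∈ A, p ≠ q → ¬ Compat S le p q

/-- `A` is a maximal antichain of the partial order `⟨S, le⟩`. -/
def IsMaxAntichainIn (S : Set ZFSet) (le : ZFSet → ZFSet → Prop) (A : Set ZFSet) : Prop :=
  IsAntichainIn S le A ∧ ∀ p ∈ S, ∃ a ∈ A, Compat S le p a

/-- `ℚ ⊲∘ ℙ` : `Q` is a set-sized complete subforcing of `ℙ` (with the induced ordering):
`Q ∈ M`, `Q ⊆ P`, `𝟙 ∈ Q`, and every maximal antichain of `ℚ` in `M` is predense in `ℙ`. -/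
def IsCompleteSub (𝕄 : GBModel) (F : ClassForcing 𝕄) (Q : ZFSet) : Prop :=
  Q ∈ 𝕄.M ∧ Q.toSet ⊆ F.P ∧ F.one ∈ Q ∧
    ∀ A : ZFSet, A ∈ 𝕄.M → A.toSet ⊆ Q.toSet → IsMaxAntichainIn Q.toSet F.le A.toSet →
      ∀ p ∈ F.P, ∃ a : ZFSet, a ∈ A ∧ Compat F.P F.le p a

/-- `ℚ^{∥q}` : the conditions of `Q` compatible with `q` in `ℙ`. -/
def QPar (𝕄 : GBModel) (F : ClassForcing 𝕄) (Q : ZFSet) (q : ZFSet) : Set ZFSet :=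
  {r | r ∈ Q ∧ Compat F.P F.le r q}

/-- The property `(*)(A, q, ℚ)`: for every `a ∈ A`, the set of `r ∈ ℚ^{∥q}` such that either
all `s ≤ q, r` satisfy `s ≤* a`, or all `s ≤ q, r` satisfy `s ⊥ a`, is dense in `ℚ^{∥q}`. -/
def StarProp (𝕄 : GBModel) (F : ClassForcing 𝕄) (A q Q : ZFSet) : Prop :=
  ∀ a : ZFSet, a ∈ A → ∀ r₀ ∈ QPar 𝕄 F Q q, ∃ r₁ ∈ QPar 𝕄 F Q q, F.le r₁ r₀ ∧
    ((∀ s ∈ F.P, F.le s q → F.le s r₁ → leStar F.P F.le s a) ∨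
      (∀ s ∈ F.P, F.le s q → F.le s r₁ → ¬ Compat F.P F.le s a))

/-- The set reduction property. -/
def SetReductionProperty (𝕄 : GBModel) (F : ClassForcing 𝕄) : Prop :=
  ∀ A : ZFSet, A ∈ 𝕄.M → (∀ a : ZFSet, a ∈ A → a ∈ F.P) →
    ∀ p ∈ F.P, ∃ q ∈ F.P, F.le q p ∧ ∃ Q : ZFSet, IsCompleteSub 𝕄 F Q ∧ StarProp 𝕄 F A q Q

/-- Every new set added by `ℙ` is added by a set-sized complete subforcing of `ℙ`. -/
def EveryNewSetBySub (𝕄 : GBModel) (F : ClassForcing 𝕄) : Prop :=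
  ∀ G : Set ZFSet, IsGeneric 𝕄 F.P F.le G →
    ∀ x : ZFSet, x ∈ MGen 𝕄 F.P G → x ∉ 𝕄.M →
      ∃ Q : ZFSet, IsCompleteSub 𝕄 F Q ∧ x ∈ MGen 𝕄 Q.toSet (G ∩ Q.toSet)

/-! ### The q-reduction of a name -/

/-- First component of a Kuratowski pair (junk value `∅` otherwise). -/
def fstZ (x : ZFSet) : ZFSet :=
  if h : ∃ a b : ZFSet, x = a.pair b then h.choose else ∅

/-- Second component of a Kuratowski pair (junk value `∅` otherwise). -/
def sndZ (x : ZFSet) : ZFSet :=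
  if h : ∃ a b : ZFSet, x = a.pair b then h.choose_spec.choose else ∅

/-- Cartesian product of two `ZFSet`s. -/
def zprod (a b : ZFSet) : ZFSet :=
  ZFSet.sep (fun x => ∃ u v : ZFSet, u ∈ a ∧ v ∈ b ∧ x = u.pair v)
    (ZFSet.powerset (ZFSet.powerset (a ∪ b)))

/-- Auxiliary rank-bounded version of the `q`-reduction of a name to `Q`. -/
def reduceAux (S : Set ZFSet) (le : ZFSet → ZFSet → Prop) (Q q : ZFSet) (o : Ordinal)
    (σ : ZFSet) : ZFSet :=
  zimage
    (fun x =>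
      (if h : (fstZ x).rank < o then reduceAux S le Q q (fstZ x).rank (fstZ x) else ∅).pair
        (sndZ x))
    (ZFSet.sep
      (fun x => ∃ τ r : ZFSet, x = τ.pair r ∧ r ∈ Q ∧
        ∃ a : ZFSet, τ.pair a ∈ σ ∧ ∀ s ∈ S, le s q → le s r → leStar S le s a)
      (zprod (⋃₀ ⋃₀ σ) Q))
termination_by o
decreasing_by exact h

/-- The `q`-reduction `σ_q^ℚ = {⟨τ_q^ℚ, r⟩ | r ∈ ℚ ∧ ∃a (⟨τ,a⟩ ∈ σ ∧ ∀ s ≤ q,r (s ≤* a))}`. -/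
def reduceName (S : Set ZFSet) (le : ZFSet → ZFSet → Prop) (Q q σ : ZFSet) : ZFSet :=
  reduceAux S le Q q σ.rank σ

/-! ### Projections -/

/-- `f` is a projection from `⟨S, le⟩` (with maximum `one`) onto the subforcing with domain
`Qs`, respecting `X`. -/
def IsProjectionResp (S : Set ZFSet) (le : ZFSet → ZFSet → Prop) (one : ZFSet)
    (Qs X : Set ZFSet) (f : ZFSet → ZFSet) : Prop :=
  (∀ p ∈ S, f p ∈ Qs) ∧
  f one = one ∧
  (∀ p ∈ S, ∀ q ∈ S, le p q → le (f p) (f q)) ∧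
  (∀ p ∈ S, ∀ q ∈ Qs, le q (f p) → ∃ r ∈ S, le r p ∧ le (f r) q) ∧
  (∀ p ∈ X, ∀ q ∈ S, le (f q) p → le q p) ∧
  (∀ p ∈ X, f p = p)

/-- `ℙ` is approachable by projections: there is a class `Π ∈ 𝒞` whose sections `π_{X,y}`
are such that for every set `X ⊆ ℙ` there are a set `y` and a set-sized subforcing `ℚ ⊇ X ∪ {𝟙}`
of `ℙ` with `π_{X,y} : ℙ → ℚ` a projection respecting `X`. -/
def ApproachableByProjections (𝕄 : GBModel) (F : ClassForcing 𝕄) : Prop :=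
  ∃ Pi ∈ 𝕄.Cls, ∀ X : ZFSet, X ∈ 𝕄.M → (∀ x : ZFSet, x ∈ X → x ∈ F.P) →
    ∃ y ∈ 𝕄.M, ∃ Q : ZFSet, Q ∈ 𝕄.M ∧ Q.toSet ⊆ F.P ∧ (∀ x : ZFSet, x ∈ X → x ∈ Q) ∧
      F.one ∈ Q ∧ ∃ f : ZFSet → ZFSet,
        (∀ u ∈ F.P, ∀ v : ZFSet, (f u = v ↔ X.pair (y.pair (u.pair v)) ∈ Pi)) ∧
        IsProjectionResp F.P F.le F.one Q.toSet X.toSet f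

/-- `p ⊩ σ ⊆ τ` for the forcing with domain `S` and ordering `le`. -/
def ForcesSubset (𝕄 : GBModel) (S : Set ZFSet) (le : ZFSet → ZFSet → Prop)
    (p σ τ : ZFSet) : Prop :=
  ∀ G : Set ZFSet, IsGeneric 𝕄 S le G → p ∈ G → nameEval G σ ⊆ nameEval G τ

/-! ### Bounded names, turning proper classes into sets -/

/-- The possible values of the name `σ` in generic extensions. -/
def PossibleValues (𝕄 : GBModel) (S : Set ZFSet) (le : ZFSet → ZFSet → Prop)
    (σ : ZFSet) : Set ZFSet :=
  {x | ∃ G : Set ZFSet, IsGeneric 𝕄 S le G ∧ nameEval G σ = x}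

/-- The name `σ` is bounded: some `A ∈ M` covers all its possible values lying in `M`. -/
def IsBoundedName (𝕄 : GBModel) (F : ClassForcing 𝕄) (σ : ZFSet) : Prop :=
  ∃ A ∈ 𝕄.M, PossibleValues 𝕄 F.P F.le σ ∩ 𝕄.M ⊆ A.toSet

/-- `ℙ` has bounded names: every `ℙ`-name in `M` is bounded. -/
def HasBoundedNames (𝕄 : GBModel) (F : ClassForcing 𝕄) : Prop :=
  ∀ σ : ZFSet, σ ∈ 𝕄.M → IsName F.P σ → IsBoundedName 𝕄 F σ

/-- `X` is a proper class of `𝕄`: a class of `𝕄` that is not (the extension of) a set of `𝕄`. -/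
def IsProperClass (𝕄 : GBModel) (X : Set ZFSet) : Prop :=
  X ∈ 𝕄.Cls ∧ ¬ ∃ x ∈ 𝕄.M, x.toSet = X

/-- The proper class `X` of `𝕄` is turned into a set by forcing with `ℙ`: some `ℙ`-name in `M`
evaluates to `X` under some generic filter. -/
def TurnsIntoSet (𝕄 : GBModel) (F : ClassForcing 𝕄) (X : Set ZFSet) : Prop :=
  ∃ σ : ZFSet, σ ∈ 𝕄.M ∧ IsName F.P σ ∧
    ∃ G : Set ZFSet, IsGeneric 𝕄 F.P F.le G ∧ (nameEval G σ).toSet = X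

/-! ### Functions and partial functions as sets, collapse forcings -/

/-- `p` is a partial function from (a subset of) `γ` into the class `Y`. -/
def IsPFunOn (p γ : ZFSet) (Y : Set ZFSet) : Prop :=
  (∀ x : ZFSet, x ∈ p → ∃ a b : ZFSet, x = a.pair b ∧ a ∈ γ ∧ b ∈ Y) ∧
  ∀ a b b' : ZFSet, a.pair b ∈ p → a.pair b' ∈ p → b = b'

/-- The domain of a set of pairs. -/
def pdom (p : ZFSet) : Set ZFSet := {a | ∃ b : ZFSet, a.pair b ∈ p}

/-- `f` is (the graph of) an injective function from `X` into `Y`. -/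
def ZInjFun (f : ZFSet) (X Y : Set ZFSet) : Prop :=
  (∀ x : ZFSet, x ∈ f → ∃ a b : ZFSet, x = a.pair b ∧ a ∈ X ∧ b ∈ Y) ∧
  (∀ a b b' : ZFSet, a.pair b ∈ f → a.pair b' ∈ f → b = b') ∧
  (∀ a ∈ X, ∃ b : ZFSet, a.pair b ∈ f) ∧
  (∀ a a' b : ZFSet, a.pair b ∈ f → a'.pair b ∈ f → a = a')

/-- `D` has size less than the cardinality of `γ` in the sense of `M`:
no function of `M` injects `γ` into `D`. -/
def SmallerThan (𝕄 : GBModel) (γ : ZFSet) (D : Set ZFSet) : Prop :=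
  ¬ ∃ f ∈ 𝕄.M, ZInjFun f γ.toSet D

/-- Conditions of `Col(γ, Y)^M`: partial functions of `M` from `γ` to `Y` whose domain has
size less than the cardinality of `γ` in `M`. -/
def ColCond (𝕄 : GBModel) (γ : ZFSet) (Y : Set ZFSet) (p : ZFSet) : Prop :=
  p ∈ 𝕄.M ∧ IsPFunOn p γ Y ∧ SmallerThan 𝕄 γ (pdom p)

/-- Conditions of `Col₋*(γ, Y)^M`: those conditions of `Col(γ, Y)^M` whose domain is
an ordinal. -/
def ColStarCond (𝕄 : GBModel) (γ : ZFSet) (Y : Set ZFSet) (p : ZFSet) : Prop :=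
  ColCond 𝕄 γ Y p ∧ ∃ β : ZFSet, β.IsOrdinal ∧ pdom p = β.toSet

/-- `f` is (the graph of) a function with domain `I`. -/
def ZFuncOn (f I : ZFSet) : Prop :=
  (∀ x : ZFSet, x ∈ f → ∃ a b : ZFSet, x = a.pair b ∧ a ∈ I) ∧
  (∀ a b b' : ZFSet, a.pair b ∈ f → a.pair b' ∈ f → b = b') ∧
  (∀ a : ZFSet, a ∈ I → ∃ b : ZFSet, a.pair b ∈ f)

/-- Application of a set-function to an argument (junk value `∅` if undefined). -/
def zapp (f i : ZFSet) : ZFSet :=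
  if h : ∃ b : ZFSet, i.pair b ∈ f then h.choose else ∅

/-! ### Pretameness -/

/-- `ℙ` is pretame for `𝕄`: for every `p ∈ ℙ`, `I ∈ M` and every `𝒞`-coded sequence
`⟨D_i | i ∈ I⟩` (coded as the class of pairs `⟨i, x⟩` with `x ∈ D_i`) of dense subclasses
of `ℙ`, there are `q ≤ p` and `⟨d_i | i ∈ I⟩ ∈ M` with `d_i ⊆ D_i` predense below `q`. -/
def Pretame (𝕄 : GBModel) (F : ClassForcing 𝕄) : Prop :=
  ∀ p ∈ F.P, ∀ I : ZFSet, I ∈ 𝕄.M → ∀ D ∈ 𝕄.Cls,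
    (∀ i : ZFSet, i ∈ I →
      (∀ x : ZFSet, i.pair x ∈ D → x ∈ F.P) ∧ ∀ r ∈ F.P, ∃ s : ZFSet, i.pair s ∈ D ∧ F.le s r) →
    ∃ q ∈ F.P, F.le q p ∧ ∃ d ∈ 𝕄.M, ZFuncOn d I ∧
      ∀ i : ZFSet, i ∈ I → (∀ x : ZFSet, x ∈ zapp d i → i.pair x ∈ D) ∧
        ∀ r ∈ F.P, F.le r q → ∃ a : ZFSet, a ∈ zapp d i ∧ Compat F.P F.le r a

/-! ### The specific forcings of Sections 6 and 7 -/

/-- Conditions of Definition 6.8: (not necessarily finite) partial functions from `ω` to `2`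
lying in `M`. -/
def PCond (𝕄 : GBModel) (p : ZFSet) : Prop :=
  p ∈ 𝕄.M ∧ IsPFunOn p ZFSet.omega {x : ZFSet | x = ∅ ∨ x = ({∅} : ZFSet)}

/-- Conditions of the finite support product `ℚ` of `ω` many copies of `ℙ`:
finite sequences `⟨p₀, …, p_k⟩` of `ℙ`-conditions. -/
def QCond (𝕄 : GBModel) (s : ZFSet) : Prop :=
  s ∈ 𝕄.M ∧ ∃ n : ZFSet, n ∈ ZFSet.omega ∧ ZFuncOn s n ∧
    ∀ i : ZFSet, i ∈ n → PCond 𝕄 (zapp s i)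

/-- The coordinatewise ordering on `ℚ`. -/
def QLe (s' s : ZFSet) : Prop :=
  pdom s ⊆ pdom s' ∧ ∀ i ∈ pdom s, zapp s i ⊆ zapp s' i

/-- The power class `𝒫(ω)^M`. -/
def PowOmega (𝕄 : GBModel) : Set ZFSet :=
  {x : ZFSet | x ∈ 𝕄.M ∧ x ⊆ ZFSet.omega}

/-- `X ⊆ M` is definable over `⟨M, ∈⟩` (from set parameters). -/
def DefinableOver (Mset : Set ZFSet) (X : Set ZFSet) : Prop :=
  ∃ (φ : EFormula) (v : ℕ → ZFSet), (∀ n, v n ∈ Mset) ∧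
    X = {x : ZFSet | x ∈ Mset ∧ EFormula.Sat Mset (Function.update v 0 x) φ}

/-- Every set of `M` is countable in `M`: it injects into `ω` by a function of `M`. -/
def AllSetsCountable (𝕄 : GBModel) : Prop :=
  ∀ x ∈ 𝕄.M, ∃ f ∈ 𝕄.M, ZInjFun f x.toSet ZFSet.omega.toSet


/-! ### Definability framework -/

/-- Rename the class parameters of a formula. -/
def GBFormula.ren (f : ℕ → ℕ) : GBFormula → GBFormula
  | .mem i j => .mem i j
  | .eq i j => .eq i j
  | .cls i j => .cls i (f j)
  | .not φ => .not (φ.ren f)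
  | .or φ ψ => .or (φ.ren f) (ψ.ren f)
  | .ex i φ => .ex i (φ.ren f)

theorem GBFormula.sat_ren (Mset : Set ZFSet) (Cs : ℕ → Set ZFSet) (f : ℕ → ℕ) (φ : GBFormula) :
    ∀ v : ℕ → ZFSet, GBFormula.Sat Mset Cs v (φ.ren f) ↔
      GBFormula.Sat Mset (fun n => Cs (f n)) v φ := by
  induction φ with
  | mem i j => intro v; rfl
  | eq i j => intro v; rfl
  | cls i j => intro v; rfl
  | not φ ih => intro v; simp only [GBFormula.ren, GBFormula.Sat, ih]
  | or φ ψ ih1 ih2 => intro v; simp only [GBFormula.ren, GBFormula.Sat, ih1, ih2]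
  | ex i φ ih => intro v; simp only [GBFormula.ren, GBFormula.Sat, ih]

/-- `Φ` is definable over `𝕄` (with class parameters, set quantifiers only). -/
def DefP (𝕄 : GBModel) (n : ℕ) (Φ : (Fin n → ZFSet) → Prop) : Prop :=
  ∃ (φ : GBFormula) (Cs : ℕ → Set ZFSet), (∀ k, Cs k ∈ 𝕄.Cls) ∧
    ∀ v : ℕ → ZFSet, (∀ k, v k ∈ 𝕄.M) →
      (GBFormula.Sat 𝕄.M Cs v φ ↔ Φ (fun i => v i))

/-- Forget the last entry of a tuple. -/
def dropLast {n : ℕ} (w : Fin (n + 1) → ZFSet) : Fin n → ZFSet := fun i => w i.castSucc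

/-- Terms: variables and constants. -/
def Tm (𝕄 : GBModel) (n : ℕ) (t : (Fin n → ZFSet) → ZFSet) : Prop :=
  (∃ i, t = fun v => v i) ∨ (∃ a ∈ 𝕄.M, t = fun _ => a)

section
variable {𝕄 : GBModel} {n : ℕ}

theorem Tm.var (i : Fin n) : Tm 𝕄 n (fun v => v i) := Or.inl ⟨i, rfl⟩

theorem Tm.const {a : ZFSet} (ha : a ∈ 𝕄.M) : Tm 𝕄 n (fun _ => a) := Or.inr ⟨a, ha, rfl⟩

theorem Tm.wk {t : (Fin n → ZFSet) → ZFSet} (ht : Tm 𝕄 n t) :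
    Tm 𝕄 (n + 1) (fun w => t (dropLast w)) := by
  rcases ht with ⟨i, rfl⟩ | ⟨a, ha, rfl⟩
  · exact Or.inl ⟨i.castSucc, rfl⟩
  · exact Or.inr ⟨a, ha, rfl⟩

theorem Tm.last : Tm 𝕄 (n + 1) (fun w => w (Fin.last n)) := Tm.var _

theorem Tm.mem_M {t : (Fin n → ZFSet) → ZFSet} (ht : Tm 𝕄 n t) {v : Fin n → ZFSet}
    (hv : ∀ i, v i ∈ 𝕄.M) : t v ∈ 𝕄.M := by
  rcases ht with ⟨i, rfl⟩ | ⟨a, ha, rfl⟩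
  · exact hv i
  · exact ha

theorem DefP.congr {Φ Ψ : (Fin n → ZFSet) → Prop} (h : DefP 𝕄 n Φ)
    (he : ∀ v : Fin n → ZFSet, (∀ i, v i ∈ 𝕄.M) → (Φ v ↔ Ψ v)) : DefP 𝕄 n Ψ := by
  obtain ⟨φ, Cs, hCs, hφ⟩ := h
  exact ⟨φ, Cs, hCs, fun v hv => (hφ v hv).trans (he _ fun i => hv i)⟩

theorem DefP.not {Φ : (Fin n → ZFSet) → Prop} (h : DefP 𝕄 n Φ) :
    DefP 𝕄 n (fun v => ¬ Φ v) := by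
  obtain ⟨φ, Cs, hCs, hφ⟩ := h
  exact ⟨.not φ, Cs, hCs, fun v hv => not_congr (hφ v hv)⟩

theorem DefP.or {Φ Ψ : (Fin n → ZFSet) → Prop} (h : DefP 𝕄 n Φ) (h' : DefP 𝕄 n Ψ) :
    DefP 𝕄 n (fun v => Φ v ∨ Ψ v) := by
  obtain ⟨φ, Cs, hCs, hφ⟩ := h
  obtain ⟨ψ, Cs', hCs', hψ⟩ := h'
  refine ⟨.or (φ.ren fun k => 2 * k) (ψ.ren fun k => 2 * k + 1),
    fun k => if k % 2 = 0 then Cs (k / 2) else Cs' (k / 2), ?_, ?_⟩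
  · intro k
    dsimp only
    split_ifs
    · exact hCs _
    · exact hCs' _
  · intro v hv
    have e1 : (fun k : ℕ => if (2 * k) % 2 = 0 then Cs (2 * k / 2) else Cs' (2 * k / 2)) = Cs := by
      funext k
      rw [if_pos (by omega), show 2 * k / 2 = k by omega]
    have e2 : (fun k : ℕ => if (2 * k + 1) % 2 = 0 then Cs ((2 * k + 1) / 2)
        else Cs' ((2 * k + 1) / 2)) = Cs' := by
      funext k
      rw [if_neg (by omega), show (2 * k + 1) / 2 = k by omega]
    simp only [GBFormula.Sat, GBFormula.sat_ren, e1, e2]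
    exact or_congr (hφ v hv) (hψ v hv)

theorem DefP.and {Φ Ψ : (Fin n → ZFSet) → Prop} (h : DefP 𝕄 n Φ) (h' : DefP 𝕄 n Ψ) :
    DefP 𝕄 n (fun v => Φ v ∧ Ψ v) :=
  (h.not.or h'.not).not.congr fun v _ => by tauto

theorem DefP.imp {Φ Ψ : (Fin n → ZFSet) → Prop} (h : DefP 𝕄 n Φ) (h' : DefP 𝕄 n Ψ) :
    DefP 𝕄 n (fun v => Φ v → Ψ v) :=
  (h.not.or h').congr fun v _ => by tauto

theorem DefP.iff {Φ Ψ : (Fin n → ZFSet) → Prop} (h : DefP 𝕄 n Φ) (h' : DefP 𝕄 n Ψ) :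
    DefP 𝕄 n (fun v => Φ v ↔ Ψ v) :=
  ((h.imp h').and (h'.imp h)).congr fun v _ => by tauto

theorem DefP.ex {Ψ : (Fin n → ZFSet) → ZFSet → Prop}
    (h : DefP 𝕄 (n + 1) (fun w => Ψ (dropLast w) (w (Fin.last n)))) :
    DefP 𝕄 n (fun v => ∃ x ∈ 𝕄.M, Ψ v x) := by
  obtain ⟨φ, Cs, hCs, hφ⟩ := h
  refine ⟨.ex n φ, Cs, hCs, fun v hv => ?_⟩
  simp only [GBFormula.Sat]
  refine exists_congr fun x => and_congr_right fun hx => ?_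
  rw [hφ]
  · have e1 : (dropLast fun i : Fin (n + 1) => Function.update v n x i) = fun i : Fin n => v i := by
      funext i
      simp only [dropLast, Fin.val_castSucc]
      exact Function.update_of_ne (by omega) _ _
    show Ψ (dropLast fun i : Fin (n + 1) => Function.update v n x i)
      (Function.update v n x (Fin.last n : ℕ)) ↔ _
    rw [e1]
    simp
  · intro k
    by_cases hk : k = n
    · subst hk; simpa using hx
    · rw [Function.update_of_ne hk]; exact hv k

theorem DefP.all {Ψ : (Fin n → ZFSet) → ZFSet → Prop}
    (h : DefP 𝕄 (n + 1) (fun w => Ψ (dropLast w) (w (Fin.last n)))) :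
    DefP 𝕄 n (fun v => ∀ x ∈ 𝕄.M, Ψ v x) :=
  (DefP.ex (Ψ := fun v x => ¬ Ψ v x) h.not).not.congr fun v _ => by
    push Not; rfl

theorem DefP.mem_cls {t : (Fin n → ZFSet) → ZFSet} {C : Set ZFSet} (hC : C ∈ 𝕄.Cls)
    (ht : Tm 𝕄 n t) : DefP 𝕄 n (fun v => t v ∈ C) := by
  rcases ht with ⟨i, rfl⟩ | ⟨a, ha, rfl⟩
  · exact ⟨.cls i 0, fun _ => C, fun _ => hC, fun v _ => Iff.rfl⟩
  · by_cases h : a ∈ C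
    · exact ⟨.or (.eq 0 0) (.eq 0 0), fun _ => C, fun _ => hC, fun v _ => by
        simp [GBFormula.Sat, h]⟩
    · exact ⟨.not (.eq 0 0), fun _ => C, fun _ => hC, fun v _ => by
        simp [GBFormula.Sat, h]⟩

theorem DefP.bind {Ψ : (Fin n → ZFSet) → ZFSet → Prop} {t : (Fin n → ZFSet) → ZFSet}
    (hv : ∀ v : Fin n → ZFSet, (∀ i, v i ∈ 𝕄.M) → t v ∈ 𝕄.M)
    (ht : DefP 𝕄 (n + 1) (fun w => w (Fin.last n) = t (dropLast w)))
    (h : DefP 𝕄 (n + 1) (fun w => Ψ (dropLast w) (w (Fin.last n)))) :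
    DefP 𝕄 n (fun v => Ψ v (t v)) :=
  (DefP.ex (Ψ := fun v x => x = t v ∧ Ψ v x) (ht.and h)).congr fun v hv' => by
    constructor
    · rintro ⟨x, _, rfl, h⟩; exact h
    · intro h; exact ⟨_, hv v hv', rfl, h⟩

theorem singleton_mem_M {a : ZFSet} (ha : a ∈ 𝕄.M) : ({a} : ZFSet) ∈ 𝕄.M := by
  have := 𝕄.pair_mem a ha a ha
  rwa [ZFSet.pair_eq_singleton] at this

theorem opair_mem_M {a b : ZFSet} (ha : a ∈ 𝕄.M) (hb : b ∈ 𝕄.M) : a.pair b ∈ 𝕄.M :=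
  𝕄.pair_mem _ (singleton_mem_M ha) _ (𝕄.pair_mem _ ha _ hb)

theorem DefP.last_eq {t : (Fin n → ZFSet) → ZFSet} (ht : Tm 𝕄 n t) :
    DefP 𝕄 (n + 1) (fun w => w (Fin.last n) = t (dropLast w)) := by
  rcases ht with ⟨i, rfl⟩ | ⟨a, ha, rfl⟩
  · exact ⟨.eq n i, fun _ => (∅ : ZFSet).toSet, fun _ => 𝕄.sets_are_classes _ 𝕄.empty_mem,
      fun v _ => Iff.rfl⟩
  · refine (DefP.mem_cls (𝕄.sets_are_classes _ (singleton_mem_M ha)) Tm.last).congr fun v _ => ?_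
    exact ZFSet.mem_singleton

theorem DefP.mem {t s : (Fin n → ZFSet) → ZFSet} (ht : Tm 𝕄 n t) (hs : Tm 𝕄 n s) :
    DefP 𝕄 n (fun v => t v ∈ s v) := by
  refine DefP.bind (Ψ := fun v x => x ∈ s v) (fun v hv => ht.mem_M hv) (DefP.last_eq ht) ?_
  rcases hs with ⟨i, rfl⟩ | ⟨a, ha, rfl⟩
  · exact ⟨.mem n i, fun _ => (∅ : ZFSet).toSet, fun _ => 𝕄.sets_are_classes _ 𝕄.empty_mem,
      fun v _ => Iff.rfl⟩
  · exact DefP.mem_cls (𝕄.sets_are_classes _ ha) Tm.last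

theorem DefP.eq {t s : (Fin n → ZFSet) → ZFSet} (ht : Tm 𝕄 n t) (hs : Tm 𝕄 n s) :
    DefP 𝕄 n (fun v => t v = s v) := by
  refine (DefP.all (Ψ := fun v x => x ∈ t v ↔ x ∈ s v)
    ((DefP.mem Tm.last ht.wk).iff (DefP.mem Tm.last hs.wk))).congr fun v hv => ?_
  constructor
  · intro h
    ext z
    constructor
    · intro hz; exact (h z (𝕄.transitive _ (ht.mem_M hv) _ hz)).1 hz
    · intro hz; exact (h z (𝕄.transitive _ (hs.mem_M hv) _ hz)).2 hz
  · intro h z _; rw [h]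

theorem DefP.eq_upair {t s u : (Fin n → ZFSet) → ZFSet} (ht : Tm 𝕄 n t) (hs : Tm 𝕄 n s)
    (hu : Tm 𝕄 n u) : DefP 𝕄 n (fun v => t v = {s v, u v}) := by
  refine (DefP.all (Ψ := fun v x => x ∈ t v ↔ (x = s v ∨ x = u v))
    ((DefP.mem Tm.last ht.wk).iff
      ((DefP.eq Tm.last hs.wk).or (DefP.eq Tm.last hu.wk)))).congr fun v hv => ?_
  constructor
  · intro h
    ext z
    rw [ZFSet.mem_pair]
    constructor
    · intro hz; exact (h z (𝕄.transitive _ (ht.mem_M hv) _ hz)).1 hz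
    · intro hz
      refine (h z ?_).2 hz
      rcases hz with rfl | rfl
      · exact hs.mem_M hv
      · exact hu.mem_M hv
  · intro h z _; rw [h, ZFSet.mem_pair]

theorem DefP.eq_pair {t s u : (Fin n → ZFSet) → ZFSet} (ht : Tm 𝕄 n t) (hs : Tm 𝕄 n s)
    (hu : Tm 𝕄 n u) : DefP 𝕄 n (fun v => t v = (s v).pair (u v)) := by
  refine (DefP.ex (Ψ := fun v x => ∃ y ∈ 𝕄.M, x = {s v, s v} ∧ y = {s v, u v} ∧ t v = {x, y})
    (DefP.ex (Ψ := fun w y => w (Fin.last n) = {s (dropLast w), s (dropLast w)} ∧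
        y = {s (dropLast w), u (dropLast w)} ∧ t (dropLast w) = {w (Fin.last n), y})
      ((DefP.eq_upair Tm.last.wk hs.wk.wk hs.wk.wk).and
        ((DefP.eq_upair Tm.last hs.wk.wk hu.wk.wk).and
          (DefP.eq_upair ht.wk.wk Tm.last.wk Tm.last))))).congr fun v hv => ?_
  constructor
  · rintro ⟨x, _, y, _, rfl, rfl, h⟩
    rw [h, ZFSet.pair_eq_singleton]; rfl
  · intro h
    refine ⟨_, 𝕄.pair_mem _ (hs.mem_M hv) _ (hs.mem_M hv), _,
      𝕄.pair_mem _ (hs.mem_M hv) _ (hu.mem_M hv), rfl, rfl, ?_⟩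
    rw [h, ZFSet.pair_eq_singleton]; rfl

theorem DefP.subst_pair {Ψ : (Fin n → ZFSet) → ZFSet → Prop} {s u : (Fin n → ZFSet) → ZFSet}
    (hs : Tm 𝕄 n s) (hu : Tm 𝕄 n u)
    (h : DefP 𝕄 (n + 1) (fun w => Ψ (dropLast w) (w (Fin.last n)))) :
    DefP 𝕄 n (fun v => Ψ v ((s v).pair (u v))) :=
  DefP.bind (t := fun v => (s v).pair (u v))
    (fun _ hv => opair_mem_M (hs.mem_M hv) (hu.mem_M hv))
    (DefP.eq_pair Tm.last hs.wk hu.wk) h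

theorem DefP.pair_mem {s u r : (Fin n → ZFSet) → ZFSet} (hs : Tm 𝕄 n s) (hu : Tm 𝕄 n u)
    (hr : Tm 𝕄 n r) : DefP 𝕄 n (fun v => (s v).pair (u v) ∈ r v) :=
  DefP.subst_pair (Ψ := fun v x => x ∈ r v) hs hu (DefP.mem Tm.last hr.wk)

theorem DefP.pair_mem_cls {s u : (Fin n → ZFSet) → ZFSet} {C : Set ZFSet} (hC : C ∈ 𝕄.Cls)
    (hs : Tm 𝕄 n s) (hu : Tm 𝕄 n u) : DefP 𝕄 n (fun v => (s v).pair (u v) ∈ C) :=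
  DefP.subst_pair (Ψ := fun v x => x ∈ C) hs hu (DefP.mem_cls hC Tm.last)

theorem DefP.triple_mem {s u w r : (Fin n → ZFSet) → ZFSet} (hs : Tm 𝕄 n s) (hu : Tm 𝕄 n u)
    (hw : Tm 𝕄 n w) (hr : Tm 𝕄 n r) :
    DefP 𝕄 n (fun v => (s v).pair ((u v).pair (w v)) ∈ r v) :=
  DefP.subst_pair (Ψ := fun v x => (s v).pair x ∈ r v) hu hw
    (DefP.pair_mem hs.wk Tm.last hr.wk)

theorem DefP.triple_mem_cls {s u w : (Fin n → ZFSet) → ZFSet} {C : Set ZFSet} (hC : C ∈ 𝕄.Cls)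
    (hs : Tm 𝕄 n s) (hu : Tm 𝕄 n u) (hw : Tm 𝕄 n w) :
    DefP 𝕄 n (fun v => (s v).pair ((u v).pair (w v)) ∈ C) :=
  DefP.subst_pair (Ψ := fun v x => (s v).pair x ∈ C) hu hw
    (DefP.pair_mem_cls hC hs.wk Tm.last)

theorem DefP.eq_triple {t s u w : (Fin n → ZFSet) → ZFSet} (ht : Tm 𝕄 n t) (hs : Tm 𝕄 n s)
    (hu : Tm 𝕄 n u) (hw : Tm 𝕄 n w) :
    DefP 𝕄 n (fun v => t v = (s v).pair ((u v).pair (w v))) :=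
  DefP.subst_pair (Ψ := fun v x => t v = (s v).pair x) hu hw
    (DefP.eq_pair ht.wk hs.wk Tm.last)

/-- Class comprehension for definable predicates of one variable. -/
theorem DefP.cls {Φ : ZFSet → Prop} (h : DefP 𝕄 1 (fun v => Φ (v 0))) :
    {x | x ∈ 𝕄.M ∧ Φ x} ∈ 𝕄.Cls := by
  obtain ⟨φ, Cs, hCs, hφ⟩ := h
  have := 𝕄.comprehension φ (fun _ => ∅) Cs (fun _ => 𝕄.empty_mem) hCs
  convert this using 1
  ext x
  refine and_congr_right fun hx => ?_
  rw [hφ]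
  · simp
  · intro k
    by_cases hk : k = 0
    · subst hk; simpa using hx
    · rw [Function.update_of_ne hk]; exact 𝕄.empty_mem

theorem DefP.sep {Φ : ZFSet → Prop} (h : DefP 𝕄 1 (fun v => Φ (v 0))) {a : ZFSet}
    (ha : a ∈ 𝕄.M) : ∃ b ∈ 𝕄.M, ∀ x, x ∈ b ↔ x ∈ a ∧ Φ x := by
  obtain ⟨b, hb, hb'⟩ := 𝕄.separation _ h.cls a ha
  refine ⟨b, hb, fun x => (hb' x).trans ?_⟩
  constructor
  · rintro ⟨h1, _, h2⟩; exact ⟨h1, h2⟩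
  · rintro ⟨h1, h2⟩; exact ⟨h1, 𝕄.transitive _ ha _ h1, h2⟩

/-- Collection for definable binary relations. -/
theorem DefP.coll {Φ : ZFSet → ZFSet → Prop}
    (h : DefP 𝕄 3 (fun v => v 0 = (v 1).pair (v 2) ∧ Φ (v 1) (v 2))) {a : ZFSet}
    (ha : a ∈ 𝕄.M) (hex : ∀ x ∈ a, ∃ y ∈ 𝕄.M, Φ x y) :
    ∃ b ∈ 𝕄.M, ∀ x ∈ a, ∃ y ∈ b, Φ x y := by
  have hC := DefP.cls (𝕄 := 𝕄)
    (Φ := fun z => ∃ x ∈ 𝕄.M, ∃ y ∈ 𝕄.M, z = x.pair y ∧ Φ x y)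
    (DefP.ex (Ψ := fun v x => ∃ y ∈ 𝕄.M, v 0 = x.pair y ∧ Φ x y) (DefP.ex
      (Ψ := fun w y => w 0 = (w 1).pair y ∧ Φ (w 1) y) h))
  obtain ⟨b, hb, hb'⟩ := 𝕄.collection _ hC a ha (by
    intro x hx
    obtain ⟨y, hy, hxy⟩ := hex x hx
    have hxM := 𝕄.transitive _ ha _ hx
    exact ⟨y, hy, opair_mem_M hxM hy, x, hxM, y, hy, rfl, hxy⟩)
  refine ⟨b, hb, fun x hx => ?_⟩
  obtain ⟨y, hy, _, x', _, y', _, e, h⟩ := hb' x hx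
  obtain ⟨rfl, rfl⟩ := ZFSet.pair_inj.1 e
  exact ⟨y, hy, h⟩

theorem exists_transitive {x : ZFSet} : x ∈ 𝕄.M →
    ∃ t ∈ 𝕄.M, x ∈ t ∧ ∀ y ∈ t, ∀ z ∈ y, z ∈ t := by
  induction x using ZFSet.inductionOn with
  | h x ih =>
  intro hx
  have hT : ∀ {m : ℕ} {t : (Fin m → ZFSet) → ZFSet}, Tm 𝕄 m t →
      DefP 𝕄 m (fun v => ∀ y ∈ 𝕄.M, y ∈ t v → ∀ z ∈ 𝕄.M, z ∈ y → z ∈ t v) := by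
    intro m t ht
    refine DefP.all (DefP.imp (DefP.mem Tm.last ht.wk) (DefP.all (DefP.imp ?_ ?_)))
    · exact DefP.mem Tm.last Tm.last.wk
    · exact DefP.mem Tm.last ht.wk.wk
  have key : ∀ t ∈ 𝕄.M, (∀ y ∈ 𝕄.M, y ∈ t → ∀ z ∈ 𝕄.M, z ∈ y → z ∈ t) ↔
      ∀ y ∈ t, ∀ z ∈ y, z ∈ t := by
    intro t ht
    constructor
    · intro h y hy z hz
      have hyM := 𝕄.transitive _ ht _ hy
      exact h y hyM hy z (𝕄.transitive _ hyM _ hz) hz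
    · intro h y _ hy z _ hz; exact h y hy z hz
  obtain ⟨b, hb, hb'⟩ := DefP.coll (𝕄 := 𝕄)
    (Φ := fun y t => y ∈ t ∧ ∀ u ∈ 𝕄.M, u ∈ t → ∀ z ∈ 𝕄.M, z ∈ u → z ∈ t)
    ((DefP.eq_pair (Tm.var 0) (Tm.var 1) (Tm.var 2)).and
      ((DefP.mem (Tm.var 1) (Tm.var 2)).and (hT (Tm.var 2)))) hx (by
      intro y hy
      obtain ⟨t, ht, hyt, htr⟩ := ih y hy (𝕄.transitive _ hx _ hy)
      exact ⟨t, ht, hyt, (key t ht).2 htr⟩)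
  obtain ⟨c, hc, hc'⟩ := DefP.sep (𝕄 := 𝕄)
    (Φ := fun t => ∀ u ∈ 𝕄.M, u ∈ t → ∀ z ∈ 𝕄.M, z ∈ u → z ∈ t) (hT (Tm.var 0)) hb
  have hsub : ∀ y ∈ x, y ∈ (⋃₀ c : ZFSet) := by
    intro y hy
    obtain ⟨t, ht, hyt, htr⟩ := hb' y hy
    exact ZFSet.mem_sUnion.2 ⟨t, (hc' t).2 ⟨ht, htr⟩, hyt⟩
  have htrans : ∀ y ∈ (⋃₀ c : ZFSet), ∀ z ∈ y, z ∈ (⋃₀ c : ZFSet) := by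
    intro y hy z hz
    obtain ⟨t, ht, hyt⟩ := ZFSet.mem_sUnion.1 hy
    exact ZFSet.mem_sUnion.2
      ⟨t, ht, (key t (𝕄.transitive _ hc _ ht)).1 ((hc' t).1 ht).2 y hyt z hz⟩
  refine ⟨⋃₀ ({⋃₀ c, {x}} : ZFSet),
    𝕄.sUnion_mem _ (𝕄.pair_mem _ (𝕄.sUnion_mem _ hc) _ (singleton_mem_M hx)), ?_, ?_⟩
  · simp
  · intro y hy z hz
    rw [ZFSet.sUnion_pair, ZFSet.mem_union, ZFSet.mem_singleton] at hy ⊢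
    left
    rcases hy with hy | rfl
    · exact htrans y hy z hz
    · exact hsub z hz

theorem exists_prod {a b : ZFSet} (ha : a ∈ 𝕄.M) (hb : b ∈ 𝕄.M) :
    ∃ c ∈ 𝕄.M, ∀ x ∈ a, ∀ y ∈ b, x.pair y ∈ c := by
  obtain ⟨d, hd, hd'⟩ := DefP.coll (𝕄 := 𝕄)
    (Φ := fun x c => ∀ y ∈ 𝕄.M, y ∈ b → x.pair y ∈ c)
    ((DefP.eq_pair (Tm.var 0) (Tm.var 1) (Tm.var 2)).and
      (DefP.all (DefP.imp (DefP.mem Tm.last (Tm.const hb))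
        (DefP.pair_mem (Tm.var 1).wk Tm.last (Tm.var 2).wk)))) ha (by
      intro x hx
      have hxM := 𝕄.transitive _ ha _ hx
      obtain ⟨c, hc, hc'⟩ := DefP.coll (𝕄 := 𝕄) (Φ := fun y z => z = x.pair y)
        ((DefP.eq_pair (Tm.var 0) (Tm.var 1) (Tm.var 2)).and
          (DefP.eq_pair (Tm.var 2) (Tm.const hxM) (Tm.var 1))) hb (by
          intro y hy
          exact ⟨_, opair_mem_M hxM (𝕄.transitive _ hb _ hy), rfl⟩)
      refine ⟨c, hc, fun y _ hy => ?_⟩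
      obtain ⟨z, hz, rfl⟩ := hc' y hy
      exact hz)
  refine ⟨⋃₀ d, 𝕄.sUnion_mem _ hd, fun x hx y hy => ?_⟩
  obtain ⟨c, hc, h⟩ := hd' x hx
  exact ZFSet.mem_sUnion.2 ⟨c, hc, h y (𝕄.transitive _ hb _ hy) hy⟩

end

/-! ### Evaluation of names -/

theorem rank_lt_of_pair_mem {τ p σ : ZFSet} (h : τ.pair p ∈ σ) : τ.rank < σ.rank := by
  have h1 : τ ∈ ({τ} : ZFSet) := by simp
  have h2 : ({τ} : ZFSet) ∈ τ.pair p := by simp [ZFSet.pair]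
  exact ((ZFSet.rank_lt_of_mem h1).trans (ZFSet.rank_lt_of_mem h2)).trans (ZFSet.rank_lt_of_mem h)

theorem fst_mem_sUnion {τ p σ : ZFSet} (h : τ.pair p ∈ σ) : τ ∈ (⋃₀ ⋃₀ σ : ZFSet) := by
  refine ZFSet.mem_sUnion.2 ⟨{τ}, ZFSet.mem_sUnion.2 ⟨_, h, ?_⟩, ?_⟩
  · simp [ZFSet.pair]
  · simp

theorem mem_nameEval {G : Set ZFSet} {σ z : ZFSet} :
    z ∈ nameEval G σ ↔ ∃ τ p : ZFSet, p ∈ G ∧ τ.pair p ∈ σ ∧ nameEval G τ = z := by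
  unfold nameEval
  rw [nameEvalAux]
  unfold zimage
  rw [@ZFSet.mem_image _ (Classical.allZFSetDefinable _)]
  constructor
  · rintro ⟨τ, hτ, rfl⟩
    obtain ⟨_, p, hp, h⟩ := ZFSet.mem_sep.1 hτ
    exact ⟨τ, p, hp, h, by rw [dif_pos (rank_lt_of_pair_mem h)]⟩
  · rintro ⟨τ, p, hp, h, rfl⟩
    exact ⟨τ, ZFSet.mem_sep.2 ⟨fst_mem_sUnion h, p, hp, h⟩,
      by rw [dif_pos (rank_lt_of_pair_mem h)]⟩

/-! ### The forcing relation for `σ = x̌` as a greatest fixed point -/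

/-- The order relation of `F` as a class of pairs. -/
def leCls {𝕄 : GBModel} (F : ClassForcing 𝕄) : Set ZFSet :=
  {x : ZFSet | ∃ p ∈ F.P, ∃ q ∈ F.P, F.le p q ∧ x = p.pair q}

theorem mem_leCls {𝕄 : GBModel} {F : ClassForcing 𝕄} {p q : ZFSet} :
    p.pair q ∈ leCls F ↔ p ∈ F.P ∧ q ∈ F.P ∧ F.le p q := by
  constructor
  · rintro ⟨p', hp, q', hq, h, e⟩
    obtain ⟨rfl, rfl⟩ := ZFSet.pair_inj.1 e
    exact ⟨hp, hq, h⟩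
  · rintro ⟨hp, hq, h⟩
    exact ⟨p, hp, q, hq, h, rfl⟩

/-- One step of the recursion for `p ⊩ τ = y̌`, with `R` in place of the forcing relation. -/
def Step {𝕄 : GBModel} (F : ClassForcing 𝕄) (R : Set ZFSet) (p τ y : ZFSet) : Prop :=
  (∀ π ∈ 𝕄.M, ∀ r ∈ 𝕄.M, π.pair r ∈ τ → ∀ q ∈ 𝕄.M, q.pair p ∈ leCls F → q.pair r ∈ leCls F →
    ∃ q' ∈ 𝕄.M, q'.pair q ∈ leCls F ∧ ∃ z ∈ 𝕄.M, z ∈ y ∧ q'.pair (π.pair z) ∈ R) ∧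
  (∀ z ∈ 𝕄.M, z ∈ y → ∀ q ∈ 𝕄.M, q.pair p ∈ leCls F →
    ∃ q' ∈ 𝕄.M, q'.pair q ∈ leCls F ∧ ∃ π ∈ 𝕄.M, ∃ r ∈ 𝕄.M, π.pair r ∈ τ ∧
      q'.pair r ∈ leCls F ∧ q'.pair (π.pair z) ∈ R)

/-- `R` is a post-fixed point of `Step`. -/
def Post {𝕄 : GBModel} (F : ClassForcing 𝕄) (R : Set ZFSet) : Prop :=
  ∀ p ∈ 𝕄.M, ∀ τ ∈ 𝕄.M, ∀ y ∈ 𝕄.M, p.pair (τ.pair y) ∈ R → Step F R p τ y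

/-- The union of all post-fixed points that are sets of `𝕄`. -/
def UCls {𝕄 : GBModel} (F : ClassForcing 𝕄) : Set ZFSet :=
  {x | x ∈ 𝕄.M ∧ ∃ R ∈ 𝕄.M, Post F {u | u ∈ R} ∧ x ∈ R}

section
variable {𝕄 : GBModel} {F : ClassForcing 𝕄}

theorem leCls_mem : leCls F ∈ 𝕄.Cls := F.le_cls

theorem le_tr {p q r : ZFSet} (h : p.pair q ∈ leCls F) (h' : q.pair r ∈ leCls F) :
    p.pair r ∈ leCls F := by
  rw [mem_leCls] at *
  exact ⟨h.1, h'.2.1, F.le_trans _ _ _ h.2.2 h'.2.2⟩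

theorem P_sub {p : ZFSet} (h : p ∈ F.P) : p ∈ 𝕄.M := 𝕄.classes_sub _ F.P_cls h

theorem snd_mem_M {τ p σ : ZFSet} (hσ : σ ∈ 𝕄.M) (h : τ.pair p ∈ σ) : τ ∈ 𝕄.M ∧ p ∈ 𝕄.M := by
  have h1 := 𝕄.transitive _ hσ _ h
  have h2 := 𝕄.transitive _ h1 {τ, p} (by simp [ZFSet.pair])
  exact ⟨𝕄.transitive _ h2 _ (by simp), 𝕄.transitive _ h2 _ (by simp)⟩

theorem Step.mono {R R' : Set ZFSet} {p τ y : ZFSet} (h : Step F R p τ y)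
    (hR : ∀ q' π r z : ZFSet, q' ∈ F.P → π.pair r ∈ τ → z ∈ y → q'.pair (π.pair z) ∈ R →
      q'.pair (π.pair z) ∈ R') : Step F R' p τ y := by
  constructor
  · intro π hπ r hr hπr q hq hqp hqr
    obtain ⟨q', hq', h1, z, hz, hzy, h2⟩ := h.1 π hπ r hr hπr q hq hqp hqr
    exact ⟨q', hq', h1, z, hz, hzy, hR _ _ _ _ (mem_leCls.1 h1).1 hπr hzy h2⟩
  · intro z hz hzy q hq hqp
    obtain ⟨q', hq', h1, π, hπ, r, hr, hπr, h3, h2⟩ := h.2 z hz hzy q hq hqp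
    exact ⟨q', hq', h1, π, hπ, r, hr, hπr, h3, hR _ _ _ _ (mem_leCls.1 h1).1 hπr hzy h2⟩

theorem Step.down {R : Set ZFSet} {p p' τ y : ZFSet} (h : Step F R p τ y)
    (hp : p'.pair p ∈ leCls F) : Step F R p' τ y :=
  ⟨fun π hπ r hr hπr q hq hqp hqr => h.1 π hπ r hr hπr q hq (le_tr hqp hp) hqr,
    fun z hz hzy q hq hqp => h.2 z hz hzy q hq (le_tr hqp hp)⟩

/-- Definability of `Step` for a definable family of relations. -/
theorem DefP.step {n : ℕ} {R : (Fin n → ZFSet) → Set ZFSet} {t s u : (Fin n → ZFSet) → ZFSet}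
    (hR : ∀ {m : ℕ} (f : (Fin m → ZFSet) → (Fin n → ZFSet)) {a b c : (Fin m → ZFSet) → ZFSet},
      (∀ t, Tm 𝕄 n t → Tm 𝕄 m fun v => t (f v)) → Tm 𝕄 m a → Tm 𝕄 m b → Tm 𝕄 m c →
      DefP 𝕄 m (fun v => (a v).pair ((b v).pair (c v)) ∈ R (f v)))
    (ht : Tm 𝕄 n t) (hs : Tm 𝕄 n s) (hu : Tm 𝕄 n u) :
    DefP 𝕄 n (fun v => Step F (R v) (t v) (s v) (u v)) := by
  have hL : leCls F ∈ 𝕄.Cls := leCls_mem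
  unfold Step
  refine DefP.and ?_ ?_
  · refine DefP.all (DefP.all (DefP.imp (DefP.pair_mem ?_ ?_ ?_) (DefP.all (DefP.imp
      (DefP.pair_mem_cls hL ?_ ?_) (DefP.imp (DefP.pair_mem_cls hL ?_ ?_) (DefP.ex (DefP.and
        (DefP.pair_mem_cls hL ?_ ?_) (DefP.ex (DefP.and (DefP.mem ?_ ?_)
          (hR _ ?_ ?_ ?_ ?_)))))))))) 
    · exact Tm.last.wk
    · exact Tm.last
    · exact hs.wk.wk
    · exact Tm.last
    · exact ht.wk.wk.wk
    · exact Tm.last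
    · exact Tm.last.wk
    · exact Tm.last
    · exact Tm.last.wk
    · exact Tm.last
    · exact hu.wk.wk.wk.wk.wk
    · intro t ht; exact ht.wk.wk.wk.wk.wk
    · exact Tm.last.wk
    · exact Tm.last.wk.wk.wk.wk
    · exact Tm.last
  · refine DefP.all (DefP.imp (DefP.mem ?_ ?_) (DefP.all (DefP.imp
      (DefP.pair_mem_cls hL ?_ ?_) (DefP.ex (DefP.and (DefP.pair_mem_cls hL ?_ ?_)
        (DefP.ex (DefP.ex (DefP.and (DefP.pair_mem ?_ ?_ ?_)
          (DefP.and (DefP.pair_mem_cls hL ?_ ?_) (hR _ ?_ ?_ ?_ ?_))))))))))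
    · exact Tm.last
    · exact hu.wk
    · exact Tm.last
    · exact ht.wk.wk
    · exact Tm.last
    · exact Tm.last.wk
    · exact Tm.last.wk
    · exact Tm.last
    · exact hs.wk.wk.wk.wk.wk
    · exact Tm.last.wk.wk
    · exact Tm.last
    · intro t ht; exact ht.wk.wk.wk.wk.wk
    · exact Tm.last.wk.wk
    · exact Tm.last.wk
    · exact Tm.last.wk.wk.wk.wk

theorem UCls_mem : UCls F ∈ 𝕄.Cls := by
  refine DefP.cls (Φ := fun x => ∃ R ∈ 𝕄.M, Post F {u | u ∈ R} ∧ x ∈ R) ?_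
  unfold Post
  refine DefP.ex (DefP.and (DefP.all (DefP.all (DefP.all (DefP.imp ?_ ?_)))) ?_)
  · exact DefP.triple_mem Tm.last.wk.wk Tm.last.wk Tm.last Tm.last.wk.wk.wk
  · refine DefP.step (R := fun w => {u | u ∈ w 1}) ?_ Tm.last.wk.wk Tm.last.wk Tm.last
    intro m f a b c hf ha hb hc
    exact DefP.triple_mem ha hb hc (hf _ (Tm.var 1))
  · exact DefP.mem (Tm.var 0).wk Tm.last

theorem DefP.stepU {n : ℕ} {t s u : (Fin n → ZFSet) → ZFSet}
    (ht : Tm 𝕄 n t) (hs : Tm 𝕄 n s) (hu : Tm 𝕄 n u) :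
    DefP 𝕄 n (fun v => Step F (UCls F) (t v) (s v) (u v)) :=
  DefP.step (R := fun _ => UCls F)
    (fun _ _ _ _ _ ha hb hc => DefP.triple_mem_cls UCls_mem ha hb hc) ht hs hu

theorem U_step {p τ y : ZFSet} (hp : p ∈ 𝕄.M) (hτ : τ ∈ 𝕄.M) (hy : y ∈ 𝕄.M)
    (h : p.pair (τ.pair y) ∈ UCls F) : Step F (UCls F) p τ y := by
  obtain ⟨_, R, hR, hpost, h⟩ := h
  refine (hpost p hp τ hτ y hy h).mono fun q' π r z _ _ _ h => ?_
  exact ⟨𝕄.transitive _ hR _ h, R, hR, hpost, h⟩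

theorem step_U (hP : ∃ PP ∈ 𝕄.M, PP.toSet = F.P) {p τ y : ZFSet} (hp : p ∈ F.P) (hτ : τ ∈ 𝕄.M)
    (hy : y ∈ 𝕄.M) (h : Step F (UCls F) p τ y) : p.pair (τ.pair y) ∈ UCls F := by
  obtain ⟨PP, hPP, hPe⟩ := hP
  have hPm : ∀ q, q ∈ F.P ↔ q ∈ PP := fun q => by rw [← hPe]; rfl
  obtain ⟨T, hT, hτT, hTt⟩ := exists_transitive hτ
  obtain ⟨X, hX, hyX, hXt⟩ := exists_transitive hy
  obtain ⟨c, hc, hc'⟩ := exists_prod hT hX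
  obtain ⟨d, hd, hd'⟩ := exists_prod hPP hc
  obtain ⟨R, hR, hR'⟩ := DefP.sep (𝕄 := 𝕄) (a := d)
    (Φ := fun x => ∃ p ∈ 𝕄.M, ∃ τ ∈ 𝕄.M, ∃ y ∈ 𝕄.M, x = p.pair (τ.pair y) ∧
      (τ ∈ T ∧ y ∈ X) ∧ Step F (UCls F) p τ y)
    (DefP.ex (DefP.ex (DefP.ex (DefP.and
      (DefP.eq_triple (Tm.var 0).wk.wk.wk Tm.last.wk.wk Tm.last.wk Tm.last)
      (DefP.and (DefP.and (DefP.mem Tm.last.wk (Tm.const hT)) (DefP.mem Tm.last (Tm.const hX)))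
        (DefP.stepU Tm.last.wk.wk Tm.last.wk Tm.last)))))) hd
  have hRi : ∀ p τ y, p ∈ F.P → τ ∈ T → y ∈ X → Step F (UCls F) p τ y →
      p.pair (τ.pair y) ∈ R := by
    intro p τ y hp hτ hy h
    exact (hR' _).2 ⟨hd' _ ((hPm p).1 hp) _ (hc' _ hτ _ hy), p, P_sub hp, τ,
      𝕄.transitive _ hT _ hτ, y, 𝕄.transitive _ hX _ hy, rfl, ⟨hτ, hy⟩, h⟩
  refine ⟨opair_mem_M (P_sub hp) (opair_mem_M hτ hy), R, hR, ?_, hRi _ _ _ hp hτT hyX h⟩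
  intro p _ τ _ y _ h
  obtain ⟨_, p', _, τ', _, y', _, e, ⟨hτT, hyX⟩, hs⟩ := (hR' _).1 h
  obtain ⟨e1, e2⟩ := ZFSet.pair_inj.1 e
  obtain ⟨e3, e4⟩ := ZFSet.pair_inj.1 e2
  subst e1 e3 e4
  refine hs.mono fun q' π r z hq' hπr hzy hU => ?_
  have hπT : π ∈ T := by
    have h1 := hTt _ hτT _ hπr
    have h2 := hTt _ h1 {π, r} (by simp [ZFSet.pair])
    exact hTt _ h2 _ (by simp)
  have hzX : z ∈ X := hXt _ hyX _ hzy
  exact hRi _ _ _ hq' hπT hzX (U_step (P_sub hq') (𝕄.transitive _ hT _ hπT)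
    (𝕄.transitive _ hX _ hzX) hU)

theorem U_down (hP : ∃ PP ∈ 𝕄.M, PP.toSet = F.P) {p p' τ y : ZFSet} (hτ : τ ∈ 𝕄.M)
    (hy : y ∈ 𝕄.M) (hp : p'.pair p ∈ leCls F) (h : p.pair (τ.pair y) ∈ UCls F) :
    p'.pair (τ.pair y) ∈ UCls F :=
  step_U hP (mem_leCls.1 hp).1 hτ hy ((U_step (P_sub (mem_leCls.1 hp).2.1) hτ hy h).down hp)

/-- A generic filter meets every class which is dense below one of its elements. -/
theorem generic_below {G : Set ZFSet} (hG : IsGeneric 𝕄 F.P F.le G) {q : ZFSet} (hq : q ∈ G)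
    {Φ : ZFSet → Prop} (hΦ : DefP 𝕄 1 (fun v => Φ (v 0)))
    (hd : ∀ s ∈ 𝕄.M, s.pair q ∈ leCls F → ∃ s' ∈ 𝕄.M, s'.pair s ∈ leCls F ∧ Φ s') :
    ∃ s ∈ G, Φ s := by
  have hqP := hG.1.1 hq
  have hqM : q ∈ 𝕄.M := P_sub hqP
  have hD := DefP.cls (𝕄 := 𝕄)
    (Φ := fun s => s ∈ F.P ∧
      (Φ s ∨ ∀ t ∈ 𝕄.M, t.pair s ∈ leCls F → ¬ t.pair q ∈ leCls F))
    ((DefP.mem_cls F.P_cls (Tm.var 0)).and (hΦ.or (DefP.all (DefP.imp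
      (DefP.pair_mem_cls leCls_mem Tm.last (Tm.var 0).wk)
      (DefP.not (DefP.pair_mem_cls leCls_mem Tm.last (Tm.const hqM)))))))
  obtain ⟨s, hsG, _, _, hs⟩ := hG.2 _ hD (by
    refine ⟨fun s hs => hs.2.1, fun p hp => ?_⟩
    by_cases hc : ∃ t ∈ 𝕄.M, t.pair p ∈ leCls F ∧ t.pair q ∈ leCls F
    · obtain ⟨t, ht, htp, htq⟩ := hc
      obtain ⟨s', hs', hst, hΦs⟩ := hd t ht htq
      exact ⟨s', ⟨hs', (mem_leCls.1 hst).1, Or.inl hΦs⟩, (mem_leCls.1 (le_tr hst htp)).2.2⟩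
    · push Not at hc
      exact ⟨p, ⟨P_sub hp, hp, Or.inr hc⟩, F.le_refl p hp⟩)
  rcases hs with hs | hs
  · exact ⟨s, hsG, hs⟩
  · obtain ⟨r, hr, h1, h2⟩ := hG.1.2.2.2 s hsG q hq
    have hrP := hG.1.1 hr
    exact absurd (mem_leCls.2 ⟨hrP, hqP, h2⟩)
      (hs r (P_sub hrP) (mem_leCls.2 ⟨hrP, hG.1.1 hsG, h1⟩))

theorem generic_up {G : Set ZFSet} (hG : IsGeneric 𝕄 F.P F.le G) {p q : ZFSet} (hp : p ∈ G)
    (h : p.pair q ∈ leCls F) : q ∈ G :=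
  hG.1.2.2.1 p hp q (mem_leCls.1 h).2.1 (mem_leCls.1 h).2.2

theorem generic_dir {G : Set ZFSet} (hG : IsGeneric 𝕄 F.P F.le G) {p q : ZFSet} (hp : p ∈ G)
    (hq : q ∈ G) : ∃ r ∈ G, r.pair p ∈ leCls F ∧ r.pair q ∈ leCls F := by
  obtain ⟨r, hr, h1, h2⟩ := hG.1.2.2.2 p hp q hq
  exact ⟨r, hr, mem_leCls.2 ⟨hG.1.1 hr, hG.1.1 hp, h1⟩, mem_leCls.2 ⟨hG.1.1 hr, hG.1.1 hq, h2⟩⟩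

theorem sound {G : Set ZFSet} (hG : IsGeneric 𝕄 F.P F.le G) (o : Ordinal) :
    ∀ τ : ZFSet, τ.rank = o → τ ∈ 𝕄.M → ∀ p ∈ G, ∀ y ∈ 𝕄.M, p.pair (τ.pair y) ∈ UCls F →
      nameEval G τ = y := by
  induction o using WellFoundedLT.induction with
  | ind o ih =>
  rintro τ rfl hτ p hp y hy hU
  have hs := U_step (P_sub (hG.1.1 hp)) hτ hy hU
  ext z
  rw [mem_nameEval]
  constructor
  · rintro ⟨π, r, hr, hπr, rfl⟩
    obtain ⟨hπM, hrM⟩ := snd_mem_M hτ hπr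
    obtain ⟨q, hq, hqp, hqr⟩ := generic_dir hG hp hr
    obtain ⟨s, hsG, z, hz, hzy, hzU⟩ := generic_below hG hq
      (Φ := fun s => ∃ z ∈ 𝕄.M, z ∈ y ∧ s.pair (π.pair z) ∈ UCls F)
      (DefP.ex (DefP.and (DefP.mem Tm.last (Tm.const hy))
        (DefP.triple_mem_cls UCls_mem (Tm.var 0).wk (Tm.const hπM) Tm.last)))
      (fun s hs' hsq => hs.1 π hπM r hrM hπr s hs' (le_tr hsq hqp) (le_tr hsq hqr))
    rw [ih _ (rank_lt_of_pair_mem hπr) π rfl hπM s hsG z hz hzU]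
    exact hzy
  · intro hzy
    have hz := 𝕄.transitive _ hy _ hzy
    obtain ⟨s, hsG, π, hπM, r, hrM, hπr, hsr, hzU⟩ := generic_below hG hp
      (Φ := fun s => ∃ π ∈ 𝕄.M, ∃ r ∈ 𝕄.M, π.pair r ∈ τ ∧ s.pair r ∈ leCls F ∧
        s.pair (π.pair z) ∈ UCls F)
      (DefP.ex (DefP.ex (DefP.and (DefP.pair_mem Tm.last.wk Tm.last (Tm.const hτ))
        (DefP.and (DefP.pair_mem_cls leCls_mem (Tm.var 0).wk.wk Tm.last)
          (DefP.triple_mem_cls UCls_mem (Tm.var 0).wk.wk Tm.last.wk (Tm.const hz))))))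
      (fun s hs' hsq => hs.2 z hz hzy s hs' hsq)
    exact ⟨π, r, generic_up hG hsG hsr, hπr,
      ih _ (rank_lt_of_pair_mem hπr) π rfl hπM s hsG z hz hzU⟩

theorem complete (hP : ∃ PP ∈ 𝕄.M, PP.toSet = F.P) {G : Set ZFSet}
    (hG : IsGeneric 𝕄 F.P F.le G) (o : Ordinal) :
    ∀ τ : ZFSet, τ.rank = o → τ ∈ 𝕄.M → ∀ y ∈ 𝕄.M, nameEval G τ = y →
      ∃ p ∈ G, p.pair (τ.pair y) ∈ UCls F := by
  induction o using WellFoundedLT.induction with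
  | ind o ih =>
  rintro τ rfl hτ y hy hev
  have hL : leCls F ∈ 𝕄.Cls := leCls_mem
  have hU : UCls F ∈ 𝕄.Cls := UCls_mem
  obtain ⟨g, hg⟩ := hG.1.2.1
  obtain ⟨q, hqG, hq⟩ := generic_below hG hg
    (Φ := fun q => Step F (UCls F) q τ y ∨
      (∃ π ∈ 𝕄.M, ∃ r ∈ 𝕄.M, π.pair r ∈ τ ∧ q.pair r ∈ leCls F ∧ ∀ q' ∈ 𝕄.M,
        q'.pair q ∈ leCls F → ∀ z ∈ 𝕄.M, z ∈ y → ¬ q'.pair (π.pair z) ∈ UCls F) ∨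
      (∃ z ∈ 𝕄.M, z ∈ y ∧ ∀ q' ∈ 𝕄.M, q'.pair q ∈ leCls F → ∀ π ∈ 𝕄.M, ∀ r ∈ 𝕄.M,
        π.pair r ∈ τ → q'.pair r ∈ leCls F → ¬ q'.pair (π.pair z) ∈ UCls F))
    (by
      refine DefP.or (DefP.stepU (Tm.var 0) (Tm.const hτ) (Tm.const hy)) (DefP.or ?_ ?_)
      · refine DefP.ex (DefP.ex (DefP.and (DefP.pair_mem Tm.last.wk Tm.last (Tm.const hτ))
          (DefP.and (DefP.pair_mem_cls hL (Tm.var 0).wk.wk Tm.last)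
            (DefP.all (DefP.imp (DefP.pair_mem_cls hL Tm.last (Tm.var 0).wk.wk.wk)
              (DefP.all (DefP.imp (DefP.mem Tm.last (Tm.const hy)) (DefP.not
                (DefP.triple_mem_cls hU ?_ ?_ ?_)))))))))
        · exact Tm.last.wk
        · exact Tm.last.wk.wk.wk
        · exact Tm.last
      · refine DefP.ex (DefP.and (DefP.mem Tm.last (Tm.const hy)) (DefP.all (DefP.imp
          (DefP.pair_mem_cls hL Tm.last (Tm.var 0).wk.wk) (DefP.all (DefP.all (DefP.imp
            (DefP.pair_mem Tm.last.wk Tm.last (Tm.const hτ)) (DefP.imp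
              (DefP.pair_mem_cls hL Tm.last.wk.wk Tm.last) (DefP.not
                (DefP.triple_mem_cls hU ?_ ?_ ?_)))))))))
        · exact Tm.last.wk.wk
        · exact Tm.last.wk
        · exact Tm.last.wk.wk.wk)
    (by
      intro s hs hsg
      have hsP := (mem_leCls.1 hsg).1
      have hrefl : s.pair s ∈ leCls F := mem_leCls.2 ⟨hsP, hsP, F.le_refl s hsP⟩
      by_cases hst : Step F (UCls F) s τ y
      · exact ⟨s, hs, hrefl, Or.inl hst⟩
      · unfold Step at hst
        rw [not_and_or] at hst
        rcases hst with hst | hst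
        · push Not at hst
          obtain ⟨π, hπ, r, hr, hπr, q, hq, hqs, hqr, h⟩ := hst
          exact ⟨q, hq, hqs, Or.inr (Or.inl ⟨π, hπ, r, hr, hπr, hqr, h⟩)⟩
        · push Not at hst
          obtain ⟨z, hz, hzy, q, hq, hqs, h⟩ := hst
          exact ⟨q, hq, hqs, Or.inr (Or.inr ⟨z, hz, hzy, h⟩)⟩)
  rcases hq with hq | ⟨π, hπ, r, hr, hπr, hqr, h⟩ | ⟨z, hz, hzy, h⟩
  · exact ⟨q, hqG, step_U hP (hG.1.1 hqG) hτ hy hq⟩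
  · exfalso
    have hzy : nameEval G π ∈ y := by
      rw [← hev]
      exact mem_nameEval.2 ⟨π, r, generic_up hG hqG hqr, hπr, rfl⟩
    have hz := 𝕄.transitive _ hy _ hzy
    obtain ⟨p', hp', hp'U⟩ := ih _ (rank_lt_of_pair_mem hπr) π rfl hπ _ hz rfl
    obtain ⟨q', hq', h1, h2⟩ := generic_dir hG hqG hp'
    exact h q' (P_sub (hG.1.1 hq')) h1 _ hz hzy (U_down hP hπ hz h2 hp'U)
  · exfalso
    rw [← hev] at hzy
    obtain ⟨π, r, hrG, hπr, hπz⟩ := mem_nameEval.1 hzy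
    obtain ⟨hπ, hr⟩ := snd_mem_M hτ hπr
    obtain ⟨p', hp', hp'U⟩ := ih _ (rank_lt_of_pair_mem hπr) π rfl hπ z hz hπz
    obtain ⟨q₁, hq₁, h1, h2⟩ := generic_dir hG hqG hp'
    obtain ⟨q', hq', h3, h4⟩ := generic_dir hG hq₁ hrG
    exact h q' (P_sub (hG.1.1 hq')) (le_tr h3 h1) π hπ r hr hπr h4
      (U_down hP hπ hz (le_tr h3 h2) hp'U)

end

/-- If `ℙ ∈ M` is a notion of set forcing (its domain and ordering are
elements of `M`), then `ℙ` has bounded names. -/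
theorem set_forcing_bounded_names
    (𝕄 : GBModel) (F : ClassForcing 𝕄)
    (hPset : ∃ PP ∈ 𝕄.M, PP.toSet = F.P)
    (hleset : ∃ L ∈ 𝕄.M, ∀ p ∈ F.P, ∀ q ∈ F.P, (F.le p q ↔ p.pair q ∈ L)) :
    HasBoundedNames 𝕄 F := by
  intro σ hσ _
  obtain ⟨PP, hPP, hPe⟩ := hPset
  have hPm : ∀ q, q ∈ F.P ↔ q ∈ PP := fun q => by rw [← hPe]; rfl
  obtain ⟨a, ha, ha'⟩ := DefP.sep (𝕄 := 𝕄) (a := PP)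
    (Φ := fun p => ∃ x ∈ 𝕄.M, p.pair (σ.pair x) ∈ UCls F)
    (DefP.ex (DefP.triple_mem_cls UCls_mem (Tm.var 0).wk (Tm.const hσ) Tm.last)) hPP
  obtain ⟨b, hb, hb'⟩ := DefP.coll (𝕄 := 𝕄) (a := a)
    (Φ := fun p x => p.pair (σ.pair x) ∈ UCls F)
    (DefP.and (DefP.eq_pair (Tm.var 0) (Tm.var 1) (Tm.var 2))
      (DefP.triple_mem_cls UCls_mem (Tm.var 1) (Tm.const hσ) (Tm.var 2))) ha
    (fun p hp => ((ha' p).1 hp).2)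
  refine ⟨b, hb, ?_⟩
  rintro x ⟨⟨G, hG, hx⟩, hxM⟩
  obtain ⟨p, hp, hpU⟩ := complete ⟨PP, hPP, hPe⟩ hG _ σ rfl hσ x hxM hx
  obtain ⟨y, hy, hyU⟩ := hb' p ((ha' p).2 ⟨(hPm p).1 (hG.1.1 hp), x, hxM, hpU⟩)
  have := sound hG _ σ rfl hσ p hp y (𝕄.transitive _ hb _ hy) hyU
  rw [← hx, this]
  exact hy

end CF
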